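/- Let n ≥ 3. There is a constant C depending only on n such that for every Schwartz function ψ on ℝⁿ, every r₀ > 0, and all r₁, r₂ ∈ [r₀/4, 4r₀], the spherical restrictions of ψ̂ satisfy the Hölder-1/2 continuity bound (∫_{S^{n−1}} |ψ̂(r₁ω) − ψ̂(r₂ω)|² dσ(ω))^{1/2} ≤ C r₀^{(1−n)/2} |r₁ − r₂|^{1/2} ‖⟨x⟩ψ‖_{L²(ℝⁿ)}. -/

import Mathlib

open MeasureTheory Complex FourierTransform Metric
open scoped ENNReal Real

noncomputable section

/-- The Cauchy–Schwarz inequality on an interval, against the constant function `1`. -/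
lemma sq_intervalIntegral_le_mul_intervalIntegral_sq {f : ℝ → ℝ} (hf : Continuous f) {a b : ℝ}
    (hab : a ≤ b) : (∫ s in a..b, f s) ^ 2 ≤ (b - a) * ∫ s in a..b, f s ^ 2 := by
  rcases hab.eq_or_lt with rfl | hlt
  · simp
  set A := ∫ s in a..b, f s with hA
  have hL : 0 < b - a := sub_pos.2 hlt
  have h0 : 0 ≤ ∫ s in a..b, ((b - a) * f s - A) ^ 2 :=
    intervalIntegral.integral_nonneg hab fun s _ => sq_nonneg _
  have h1 : ∫ s in a..b, ((b - a) * f s - A) ^ 2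
      = (b - a) * ((b - a) * (∫ s in a..b, f s ^ 2) - A ^ 2) := by
    have : ∀ s, ((b - a) * f s - A) ^ 2
        = (b - a) ^ 2 * f s ^ 2 - 2 * (b - a) * A * f s + A ^ 2 := fun s => by ring
    simp_rw [this]
    rw [intervalIntegral.integral_add, intervalIntegral.integral_sub,
      intervalIntegral.integral_const_mul, intervalIntegral.integral_const_mul,
      intervalIntegral.integral_const, ← hA, smul_eq_mul]
    · ring
    all_goals exact Continuous.intervalIntegrable (by fun_prop) _ _
  rw [h1] at h0
  linarith [nonneg_of_mul_nonneg_right h0 hL]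

/-- A `C¹` function is Hölder-`1/2` with the `L²` norm of its derivative as constant. -/
lemma norm_sub_sq_le_mul_integral_norm_deriv_sq {F : Type*} [NormedAddCommGroup F]
    [NormedSpace ℝ F] [CompleteSpace F] {f f' : ℝ → F} (hf : ∀ s, HasDerivAt f (f' s) s)
    (hf' : Continuous f') {a b : ℝ} (hab : a ≤ b) :
    ‖f b - f a‖ ^ 2 ≤ (b - a) * ∫ s in a..b, ‖f' s‖ ^ 2 := by
  rw [← intervalIntegral.integral_eq_sub_of_hasDerivAt (fun s _ => hf s)
    (hf'.intervalIntegrable _ _)]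
  calc _ ≤ (∫ s in a..b, ‖f' s‖) ^ 2 := by
        gcongr
        exact intervalIntegral.norm_integral_le_integral_norm hab
    _ ≤ _ := sq_intervalIntegral_le_mul_intervalIntegral_sq hf'.norm hab

section

variable {E : Type*} [NormedAddCommGroup E]

/-- Integration in polar coordinates. -/
lemma lintegral_eq_lintegral_toSphere [NormedSpace ℝ E] [Nontrivial E] [MeasurableSpace E]
    [BorelSpace E] [FiniteDimensional ℝ E] (μ : Measure E) [μ.IsAddHaarMeasure] {f : E → ℝ≥0∞}
    (hf : Measurable f) :
    ∫⁻ x, f x ∂μ = ∫⁻ ω : sphere (0 : E) 1, (∫⁻ r in Set.Ioi (0 : ℝ),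
      ENNReal.ofReal (r ^ (Module.finrank ℝ E - 1)) * f (r • (ω : E))) ∂μ.toSphere := by
  have hm : Measurable fun z : sphere (0 : E) 1 × Set.Ioi (0 : ℝ) =>
      f ((z.2 : ℝ) • (z.1 : E)) := by fun_prop
  calc ∫⁻ x, f x ∂μ = ∫⁻ x : ({0}ᶜ : Set E), f x ∂(μ.comap (↑)) := by
        rw [lintegral_subtype_comap (measurableSet_singleton _).compl f,
          restrict_compl_singleton]
    _ = ∫⁻ z, f ((z.2 : ℝ) • (z.1 : E))
          ∂μ.toSphere.prod (.volumeIoiPow (Module.finrank ℝ E - 1)) := by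
        rw [← μ.measurePreserving_homeomorphUnitSphereProd.lintegral_comp hm]
        refine lintegral_congr fun x => ?_
        have hx : ‖(x : E)‖ ≠ 0 := norm_ne_zero_iff.2 x.2
        simp [smul_smul, hx]
    _ = _ := by
        rw [lintegral_prod _ hm.aemeasurable]
        refine lintegral_congr fun ω => ?_
        have hω : Measurable fun r : ℝ => f (r • (ω : E)) := by fun_prop
        rw [Measure.volumeIoiPow, lintegral_withDensity_eq_lintegral_mul _ (by fun_prop)
          (by fun_prop), ← lintegral_subtype_comap measurableSet_Ioi]
        rfl

/-- The operator norm is bounded by the Hilbert–Schmidt norm. -/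
lemma ContinuousLinearMap.sq_norm_le_sum_sq_norm_apply [InnerProductSpace ℝ E] {ι F : Type*}
    [Fintype ι] [NormedAddCommGroup F] [NormedSpace ℝ F] (b : OrthonormalBasis ι ℝ E)
    (L : E →L[ℝ] F) : ‖L‖ ^ 2 ≤ ∑ i, ‖L (b i)‖ ^ 2 := by
  have hS : 0 ≤ ∑ i, ‖L (b i)‖ ^ 2 := by positivity
  rw [← Real.le_sqrt (norm_nonneg _) hS]
  refine L.opNorm_le_bound (Real.sqrt_nonneg _) fun x => ?_
  calc ‖L x‖ = ‖∑ i, inner ℝ (b i) x • L (b i)‖ := by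
        conv_lhs => rw [← b.sum_repr' x]
        simp
    _ ≤ ∑ i, ‖L (b i)‖ * ‖inner ℝ (b i) x‖ := by
        refine (norm_sum_le _ _).trans_eq (Finset.sum_congr rfl fun i _ => ?_)
        rw [norm_smul, mul_comm]
    _ ≤ √(∑ i, ‖L (b i)‖ ^ 2) * √(∑ i, ‖inner ℝ (b i) x‖ ^ 2) :=
        Real.sum_mul_le_sqrt_mul_sqrt _ _ _
    _ = _ := by rw [b.sum_sq_norm_inner_right, Real.sqrt_sq (norm_nonneg _)]

variable [InnerProductSpace ℝ E] [FiniteDimensional ℝ E] [MeasurableSpace E] [BorelSpace E]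
  {H : Type*} [NormedAddCommGroup H] [InnerProductSpace ℂ H]

lemma SchwartzMap.integrable_norm_sq (f : SchwartzMap E H) : Integrable fun x => ‖f x‖ ^ 2 :=
  (memLp_two_iff_integrable_sq_norm f.continuous.aestronglyMeasurable).1 (f.memLp 2)

open LineDeriv in
lemma SchwartzMap.integral_norm_sq_lineDeriv_fourier [CompleteSpace H] (f : SchwartzMap E H)
    (m : E) :
    Integrable (fun x => inner ℝ x m ^ 2 * ‖f x‖ ^ 2) ∧
    ∫ ξ, ‖(∂_{m} (𝓕 f)) ξ‖ ^ 2 = (2 * π) ^ 2 * ∫ x, inner ℝ x m ^ 2 * ‖f x‖ ^ 2 := by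
  have hm : (inner ℝ · m : E → ℝ).HasTemperateGrowth := by fun_prop
  have hg : ∀ x, ‖SchwartzMap.smulLeftCLM H (inner ℝ · m : E → ℝ) f x‖ ^ 2
      = inner ℝ x m ^ 2 * ‖f x‖ ^ 2 := fun x => by
    rw [SchwartzMap.smulLeftCLM_apply_apply hm, norm_smul, mul_pow, Real.norm_eq_abs, sq_abs]
  refine ⟨?_, ?_⟩
  · simpa only [hg] using
      (SchwartzMap.smulLeftCLM H (inner ℝ · m : E → ℝ) f).integrable_norm_sq
  · rw [SchwartzMap.lineDerivOp_fourier_eq, SchwartzMap.integral_norm_sq_fourier,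
      ← integral_const_mul]
    refine integral_congr_ae (.of_forall fun x => ?_)
    simp only [_root_.smul_apply, norm_smul, mul_pow, hg]
    simp [abs_of_pos Real.pi_pos, mul_pow]

open LineDeriv in
/-- Plancherel's theorem for the gradient of the Fourier transform. -/
lemma SchwartzMap.lintegral_norm_fderiv_fourier_sq_le [CompleteSpace H] (f : SchwartzMap E H) :
    ∫⁻ ξ, ENNReal.ofReal (‖fderiv ℝ (𝓕 f : SchwartzMap E H) ξ‖ ^ 2)
      ≤ ENNReal.ofReal ((2 * π) ^ 2 * ∫ x, (1 + ‖x‖ ^ 2) * ‖f x‖ ^ 2) := by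
  have b := stdOrthonormalBasis ℝ E
  have hsum : ∀ x, ∑ i, inner ℝ x (b i) ^ 2 * ‖f x‖ ^ 2 = ‖x‖ ^ 2 * ‖f x‖ ^ 2 := fun x => by
    rw [← Finset.sum_mul, ← b.sum_sq_norm_inner_left x]
    simp
  have hmul : Integrable fun x => ‖x‖ ^ 2 * ‖f x‖ ^ 2 := by
    simpa only [hsum] using integrable_finsetSum Finset.univ
      fun i _ => (f.integral_norm_sq_lineDeriv_fourier (b i)).1
  have hd : ∀ i, Integrable fun ξ => ‖(∂_{b i} (𝓕 f : SchwartzMap E H) : SchwartzMap E H) ξ‖ ^ 2 :=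
    fun i => (∂_{b i} (𝓕 f : SchwartzMap E H) : SchwartzMap E H).integrable_norm_sq
  calc _ ≤ ∫⁻ ξ, ENNReal.ofReal
        (∑ i, ‖(∂_{b i} (𝓕 f : SchwartzMap E H) : SchwartzMap E H) ξ‖ ^ 2) := by
        gcongr with ξ
        simp only [SchwartzMap.lineDerivOp_apply_eq_fderiv]
        exact ContinuousLinearMap.sq_norm_le_sum_sq_norm_apply b _
    _ = ENNReal.ofReal (∫ ξ, ∑ i, ‖(∂_{b i} (𝓕 f : SchwartzMap E H) : SchwartzMap E H) ξ‖ ^ 2) :=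
        (ofReal_integral_eq_lintegral_ofReal
          (integrable_finsetSum _ fun i _ => hd i)
          (.of_forall fun ξ => by positivity)).symm
    _ = ENNReal.ofReal ((2 * π) ^ 2 * ∫ x, ‖x‖ ^ 2 * ‖f x‖ ^ 2) := by
        rw [integral_finsetSum _ fun i _ => hd i]
        simp only [(f.integral_norm_sq_lineDeriv_fourier _).2]
        rw [← Finset.mul_sum, ← integral_finsetSum _ fun i _ =>
          (f.integral_norm_sq_lineDeriv_fourier (b i)).1]
        simp only [hsum]
    _ ≤ _ := by
        have hadd : Integrable fun x => (1 + ‖x‖ ^ 2) * ‖f x‖ ^ 2 :=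
          (f.integrable_norm_sq.add hmul).congr (.of_forall fun x => by
            simp only [Pi.add_apply]
            ring)
        refine ENNReal.ofReal_le_ofReal (mul_le_mul_of_nonneg_left
          (integral_mono hmul hadd fun x => ?_) (by positivity))
        simp only
        gcongr
        linarith

/-- The difference of two spherical restrictions of a Schwartz function is controlled by the `L²`
norm of its gradient. -/
lemma SchwartzMap.lintegral_toSphere_norm_sub_sq_le [Nontrivial E] [CompleteSpace H]
    (μ : Measure E) [μ.IsAddHaarMeasure] (g : SchwartzMap E H) {c a b : ℝ}
    (hc : 0 < c) (hca : c ≤ a) (hab : a ≤ b) :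
    ∫⁻ ω : sphere (0 : E) 1, ENNReal.ofReal (‖g (b • (ω : E)) - g (a • (ω : E))‖ ^ 2) ∂μ.toSphere
      ≤ ENNReal.ofReal ((b - a) * (c ^ (Module.finrank ℝ E - 1))⁻¹) *
        ∫⁻ ξ, ENNReal.ofReal (‖fderiv ℝ g ξ‖ ^ 2) ∂μ := by
  have hg' : Continuous (fderiv ℝ g) := (g.smooth 1).continuous_fderiv one_ne_zero
  rw [lintegral_eq_lintegral_toSphere μ (by fun_prop),
    ← lintegral_const_mul' _ _ ENNReal.ofReal_ne_top]
  refine lintegral_mono fun ω => ?_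
  have hω : ‖(ω : E)‖ = 1 := by simp
  have hd : ∀ s : ℝ, HasDerivAt (fun s : ℝ => g (s • (ω : E)))
      (fderiv ℝ g (s • (ω : E)) (ω : E)) s := fun s => by
    have h := (g.differentiableAt (x := s • (ω : E))).hasFDerivAt.comp_hasDerivAt s
      ((hasDerivAt_id s).smul_const (ω : E))
    simpa [Function.comp_def] using h
  have hcont : Continuous fun s : ℝ => ‖fderiv ℝ g (s • (ω : E)) (ω : E)‖ ^ 2 := by fun_prop
  have hba : 0 ≤ b - a := sub_nonneg.2 hab
  calc _ ≤ ENNReal.ofReal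
        ((b - a) * ∫ s in a..b, ‖fderiv ℝ g (s • (ω : E)) (ω : E)‖ ^ 2) := by
        gcongr
        exact norm_sub_sq_le_mul_integral_norm_deriv_sq hd (by fun_prop) hab
    _ = ENNReal.ofReal (b - a) * ∫⁻ s in Set.Ioc a b,
          ENNReal.ofReal (‖fderiv ℝ g (s • (ω : E)) (ω : E)‖ ^ 2) := by
        rw [ENNReal.ofReal_mul hba, intervalIntegral.integral_of_le hab,
          ofReal_integral_eq_lintegral_ofReal
            (hcont.intervalIntegrable a b).1 (.of_forall fun s => by positivity)]
    _ ≤ ENNReal.ofReal (b - a) * ∫⁻ s in Set.Ioc a b,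
          ENNReal.ofReal (c ^ (Module.finrank ℝ E - 1))⁻¹ *
            (ENNReal.ofReal (s ^ (Module.finrank ℝ E - 1)) *
              ENNReal.ofReal (‖fderiv ℝ g (s • (ω : E))‖ ^ 2)) := by
        refine mul_le_mul_right ?_ _
        refine setLIntegral_mono' measurableSet_Ioc fun s hs => ?_
        have hcs : c ≤ s := hca.trans hs.1.le
        have hs0 : 0 < s := hc.trans_le hcs
        rw [← ENNReal.ofReal_mul (by positivity), ← ENNReal.ofReal_mul (by positivity)]
        refine ENNReal.ofReal_le_ofReal ?_
        have h1 : ‖fderiv ℝ g (s • (ω : E)) (ω : E)‖ ≤ ‖fderiv ℝ g (s • (ω : E))‖ := by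
          simpa [hω] using (fderiv ℝ g (s • (ω : E))).le_opNorm (ω : E)
        have h2 : 1 ≤ (c ^ (Module.finrank ℝ E - 1))⁻¹ * s ^ (Module.finrank ℝ E - 1) := by
          rw [inv_mul_eq_div, one_le_div (by positivity)]
          gcongr
        rw [← mul_assoc]
        calc _ ≤ 1 * ‖fderiv ℝ g (s • (ω : E))‖ ^ 2 := by rw [one_mul]; gcongr
          _ ≤ _ := by gcongr
    _ ≤ _ := by
        rw [lintegral_const_mul' _ _ ENNReal.ofReal_ne_top, ← mul_assoc, ← ENNReal.ofReal_mul hba]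
        gcongr
        exact fun s hs => hc.trans_le (hca.trans hs.1.le)

end

/-- Hölder-1/2 continuity in the radius of the spherical restrictions
of `ψ̂`, with the weighted norm `‖⟨x⟩ψ‖_{L²}` on the right-hand side. -/
theorem sphere_restriction_holder_continuity (n : ℕ) (hn : 3 ≤ n) :
    ∃ C : ℝ, 0 < C ∧ ∀ ψ : SchwartzMap (EuclideanSpace ℝ (Fin n)) ℂ,
      ∀ r₀ : ℝ, 0 < r₀ → ∀ r₁ r₂ : ℝ,
        r₁ ∈ Set.Icc (r₀ / 4) (4 * r₀) → r₂ ∈ Set.Icc (r₀ / 4) (4 * r₀) →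
      Real.sqrt (∫ ω : sphere (0 : EuclideanSpace ℝ (Fin n)) 1,
          ‖𝓕 (⇑ψ) (r₁ • (ω : EuclideanSpace ℝ (Fin n)))
            - 𝓕 (⇑ψ) (r₂ • (ω : EuclideanSpace ℝ (Fin n)))‖ ^ 2
          ∂((volume : Measure (EuclideanSpace ℝ (Fin n))).toSphere))
        ≤ C * r₀ ^ (((1 : ℝ) - (n : ℝ)) / 2) * Real.sqrt |r₁ - r₂| *
          Real.sqrt (∫ x : EuclideanSpace ℝ (Fin n), (1 + ‖x‖ ^ 2) * ‖ψ x‖ ^ 2) := by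
  have : Nontrivial (EuclideanSpace ℝ (Fin n)) :=
    Module.nontrivial_of_finrank_pos (R := ℝ) (by simp; omega)
  refine ⟨2 * π * √(4 ^ (n - 1)), by positivity, fun ψ r₀ hr₀ r₁ r₂ h₁ h₂ => ?_⟩
  wlog h : r₂ ≤ r₁ generalizing r₁ r₂
  · simpa only [norm_sub_rev, abs_sub_comm] using this r₂ r₁ h₂ h₁ (le_of_not_ge h)
  set I := ∫ x : EuclideanSpace ℝ (Fin n), (1 + ‖x‖ ^ 2) * ‖ψ x‖ ^ 2 with hI
  have hI0 : 0 ≤ I := integral_nonneg fun x => by positivity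
  have hr : 0 ≤ r₁ - r₂ := sub_nonneg.2 h
  have hψ : Continuous (𝓕 (⇑ψ)) := (𝓕 ψ).continuous
  have hpow : (r₀ ^ (((1 : ℝ) - n) / 2)) = √((r₀ ^ (n - 1))⁻¹) := by
    rw [Real.sqrt_eq_rpow, ← Real.rpow_natCast, ← Real.rpow_neg hr₀.le, ← Real.rpow_mul hr₀.le,
      Nat.cast_sub (by omega)]
    congr 1
    push_cast
    ring
  have key := ((𝓕 ψ).lintegral_toSphere_norm_sub_sq_le volume (c := r₀ / 4) (by positivity)
    h₂.1 h).trans (mul_le_mul_right ψ.lintegral_norm_fderiv_fourier_sq_le _)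
  rw [← ENNReal.ofReal_mul (by positivity), finrank_euclideanSpace_fin, ← hI] at key
  rw [integral_eq_lintegral_of_nonneg_ae (.of_forall fun ω => by positivity)
    (Continuous.aestronglyMeasurable (by fun_prop))]
  refine (Real.sqrt_le_sqrt (ENNReal.toReal_le_of_le_ofReal (by positivity) key)).trans_eq ?_
  conv_rhs => rw [hpow, abs_of_nonneg hr, ← Real.sqrt_sq (show 0 ≤ 2 * π by positivity),
    ← Real.sqrt_mul (by positivity), ← Real.sqrt_mul (by positivity),
    ← Real.sqrt_mul (by positivity), ← Real.sqrt_mul (by positivity)]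
  congr 1
  rw [div_pow, inv_div]
  ring
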